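/- arXiv:1907.09391 — 3 statements merged into one kernel-verified Lean document; each statement's English description precedes it below -/
import Mathlib

section
/- Let n be a positive integer, a(k) = k - n, b(k) = k + 1, and S_{a,b} = { (k-n)·x(k+1) - k·x(k) : x ∈ K[k] }. Then the quotient space K[k]/S_{a,b} is one-dimensional, spanned by the coset of k^n. -/
open Polynomial

/-!
Taylor expansion shows that `k (x(k + 1) - x(k))` has degree at most that of `x`, with the top
coefficient multiplied by the degree. Hence `x ↦ (k - n) x(k + 1) - k x(k)` is triangular in the
monomial basis, with diagonal entry `m - n` at `k ^ m`. Over a `ℚ`-algebra these entries are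
invertible except for the zero at `m = n`. So the image contains a monic polynomial of every degree
`m ≠ n`, and together with `k ^ n` these span all polynomials. Conversely, a preimage of `c k ^ n`
has degree at most `n`, where the zero diagonal entry forces `c = 0`.
-/

theorem submodule_eq_top_of_forall_exists_coeff_eq_one {R : Type*} [Ring R]
    (N : Submodule R R[X]) (hN : ∀ d, ∃ q ∈ N, q.natDegree ≤ d ∧ q.coeff d = 1) : N = ⊤ := by
  nontriviality R using Subsingleton.elim N ⊤
  choose q hqN hq_deg hq_coeff using hN
  let S : Sequence R :=
    ⟨q, fun d ↦ degree_eq_of_le_of_coeff_ne_zero (natDegree_le_iff_degree_le.mp (hq_deg d))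
      (by rw [hq_coeff]; exact one_ne_zero)⟩
  have hS_monic (d : ℕ) : (S d).Monic :=
    monic_of_natDegree_le_of_coeff_eq_one d (hq_deg d) (hq_coeff d)
  rw [eq_top_iff, ← S.span fun d ↦ (hS_monic d).leadingCoeff ▸ isUnit_one, Submodule.span_le]
  exact Set.range_subset_iff.mpr hqN

section Triangular

variable {R : Type*} [CommRing R]

/-- `L` is triangular in the basis `X ^ m`, filtered by degree, with diagonal entries `μ m`. As `m`
may exceed `p.natDegree`, the condition includes that `L` does not raise degrees. -/
def IsDegreeTriangular (L : Module.End R R[X]) (μ : ℕ → R) : Prop :=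
  ∀ (p : R[X]) (m : ℕ), p.natDegree ≤ m → (L p).coeff m = μ m * p.coeff m

namespace IsDegreeTriangular

variable {L : Module.End R R[X]} {μ : ℕ → R} {n : ℕ}

theorem natDegree_le (hL : IsDegreeTriangular L μ) (p : R[X]) :
    (L p).natDegree ≤ p.natDegree :=
  natDegree_le_iff_coeff_eq_zero.mpr fun m hm ↦ by
    rw [hL p m hm.le, coeff_eq_zero_of_natDegree_lt hm, mul_zero]

theorem codisjoint_range_span_X_pow (hL : IsDegreeTriangular L μ)
    (hμ : ∀ m, m ≠ n → IsUnit (μ m)) : Codisjoint L.range (R ∙ (X ^ n : R[X])) := by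
  refine codisjoint_iff.mpr (submodule_eq_top_of_forall_exists_coeff_eq_one _ fun d ↦ ?_)
  obtain rfl | hd := eq_or_ne d n
  · exact ⟨X ^ d, Submodule.mem_sup_right (Submodule.mem_span_singleton_self _),
      natDegree_X_pow_le d, coeff_X_pow_self d⟩
  · obtain ⟨u, hu⟩ := (hμ d hd).exists_right_inv
    have hdeg : (C u * X ^ d).natDegree ≤ d := natDegree_C_mul_X_pow_le u d
    refine ⟨L (C u * X ^ d), Submodule.mem_sup_left ⟨_, rfl⟩, (hL.natDegree_le _).trans hdeg, ?_⟩
    rw [hL _ d hdeg, coeff_C_mul, coeff_X_pow_self, mul_one, hu]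

theorem disjoint_range_span_X_pow (hL : IsDegreeTriangular L μ) (hn : μ n = 0)
    (hμ : ∀ m, n < m → IsLeftRegular (μ m)) : Disjoint L.range (R ∙ (X ^ n : R[X])) := by
  rw [Submodule.disjoint_def]
  rintro _ ⟨p, rfl⟩ hp
  obtain ⟨c, hc⟩ := Submodule.mem_span_singleton.mp hp
  have hcoeff (m : ℕ) (hm : p.natDegree ≤ m) : c * (X ^ n : R[X]).coeff m = μ m * p.coeff m := by
    rw [← hL p m hm, ← hc, coeff_smul, smul_eq_mul]
  have hdeg : p.natDegree ≤ n := by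
    by_contra! hlt
    have hlead : p.leadingCoeff = 0 := hμ _ hlt <| by
      simpa [coeff_X_pow, hlt.ne'] using (hcoeff _ le_rfl).symm
    simp [leadingCoeff_eq_zero.mp hlead] at hlt
  have hc0 : c = 0 := by simpa [hn] using hcoeff n hdeg
  rw [← hc, hc0, zero_smul]

theorem isCompl_range_span_X_pow (hL : IsDegreeTriangular L μ) (hn : μ n = 0)
    (hμ : ∀ m, m ≠ n → IsUnit (μ m)) : IsCompl L.range (R ∙ (X ^ n : R[X])) :=
  ⟨hL.disjoint_range_span_X_pow hn fun m hm ↦ (hμ m hm.ne').isRegular.left,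
    hL.codisjoint_range_span_X_pow hμ⟩

end IsDegreeTriangular

end Triangular

section TaylorCoeff

variable {R : Type*} [Semiring R]

theorem coeff_taylor_of_natDegree_le_succ (r : R) {p : R[X]} {m : ℕ} (hp : p.natDegree ≤ m + 1) :
    (taylor r p).coeff m = p.coeff m + (m + 1) * p.coeff (m + 1) * r := by
  have hdeg : (hasseDeriv m p).natDegree < 2 := by
    have := natDegree_hasseDeriv_le p m
    omega
  rw [taylor_coeff, eval_eq_sum_range' hdeg]
  simp [Finset.sum_range_succ, hasseDeriv_coeff, add_comm 1 m]

theorem coeff_taylor_of_natDegree_le (r : R) {p : R[X]} {m : ℕ} (hp : p.natDegree ≤ m) :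
    (taylor r p).coeff m = p.coeff m := by
  rw [coeff_taylor_of_natDegree_le_succ r (hp.trans m.le_succ),
    coeff_eq_zero_of_natDegree_lt (Nat.lt_succ_of_le hp), mul_zero, zero_mul, add_zero]

end TaylorCoeff

theorem isUnit_natCast_sub_natCast {R : Type*} [Ring R] [Algebra ℚ R] {m n : ℕ}
    (h : m ≠ n) : IsUnit ((m : R) - n) := by
  have hunit : IsUnit ((m : ℚ) - n) := (sub_ne_zero.mpr (Nat.cast_injective.ne h)).isUnit
  simpa using hunit.map (algebraMap ℚ R)

section DifferenceMap

variable {R : Type*} [CommRing R]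

/-- The map `x(k) ↦ a(k) x(k + 1) - b(k - 1) x(k)`, whose range is the space `S_{a,b}`. -/
noncomputable def differenceMap (a b : R[X]) : Module.End R R[X] :=
  LinearMap.mulLeft R a ∘ₗ taylor 1 - LinearMap.mulLeft R (taylor (-1) b)

theorem differenceMap_apply (a b x : R[X]) :
    differenceMap a b x = a * taylor 1 x - taylor (-1) b * x :=
  rfl

theorem isDegreeTriangular_differenceMap_X_sub_C_X_add_C (α β : R) :
    IsDegreeTriangular (differenceMap (X - C α) (X + C β)) fun m ↦ m + 1 - α - β := by
  intro p m hp
  have hexpand : differenceMap (X - C α) (X + C β) p =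
      X * taylor 1 p - X * p - C α * taylor 1 p - C (β - 1) * p := by
    simp only [differenceMap_apply, map_add, taylor_X, taylor_C, C_sub, C_neg, C_1]
    ring
  rw [hexpand]
  simp only [coeff_sub, coeff_C_mul, coeff_taylor_of_natDegree_le 1 hp]
  cases m with
  | zero =>
    simp only [coeff_X_mul_zero, Nat.cast_zero]
    ring
  | succ m =>
    rw [coeff_X_mul, coeff_X_mul, coeff_taylor_of_natDegree_le_succ 1 hp]
    push_cast
    ring

theorem differenceMap_X_sub_C_X_add_C_one_apply (α : R) (x : R[X]) :
    differenceMap (X - C α) (X + C 1) x = (X - C α) * x.comp (X + 1) - X * x := by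
  simp [differenceMap_apply, taylor_apply]

theorem isCompl_range_differenceMap_span_X_pow [Algebra ℚ R] (n : ℕ) :
    IsCompl (differenceMap (X - C (n : R)) (X + C 1)).range (R ∙ (X ^ n : R[X])) := by
  refine (isDegreeTriangular_differenceMap_X_sub_C_X_add_C (n : R) 1).isCompl_range_span_X_pow
    (by ring) fun m hm ↦ ?_
  have hdiag : (m : R) + 1 - n - 1 = m - n := by ring
  exact hdiag ▸ isUnit_natCast_sub_natCast hm

theorem stmt4_general [Algebra ℚ R] (n : ℕ) :
    (∀ p : R[X], ∃ x : R[X], ∃ c : R,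
      p = ((X - C (n : R)) * x.comp (X + 1) - X * x) + C c * X ^ n) ∧
    (∀ x : R[X], ∀ c : R,
      C c * X ^ n = (X - C (n : R)) * x.comp (X + 1) - X * x → c = 0) := by
  have hcompl := isCompl_range_differenceMap_span_X_pow (R := R) n
  simp only [← differenceMap_X_sub_C_X_add_C_one_apply, ← smul_eq_C_mul]
  refine ⟨fun p ↦ ?_, fun x c h ↦ ?_⟩
  · obtain ⟨_, _, ⟨x, rfl⟩, hq, hp⟩ :=
      Submodule.codisjoint_iff_exists_add_eq.mp hcompl.codisjoint p
    obtain ⟨c, rfl⟩ := Submodule.mem_span_singleton.mp hq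
    exact ⟨x, c, hp.symm⟩
  · have hzero : c • (X ^ n : R[X]) = 0 :=
      Submodule.disjoint_def.mp hcompl.disjoint _ ⟨x, h.symm⟩
        (Submodule.smul_mem _ c (Submodule.mem_span_singleton_self _))
    simpa using congrArg (coeff · n) hzero

end DifferenceMap

/-- for a(k) = k - n, b(k) = k + 1, the quotient K[k]/S_{a,b} is
one-dimensional, spanned by the coset of k^n. -/
theorem stmt4 {K : Type*} [Field K] [CharZero K] (n : ℕ) (hn : 0 < n) :
    (∀ p : Polynomial K, ∃ x : Polynomial K, ∃ c : K,
      p = ((X - C (n : K)) * x.comp (X + 1) - X * x) + C c * X ^ n) ∧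
    (∀ x : Polynomial K, ∀ c : K,
      C c * X ^ n = (X - C (n : K)) * x.comp (X + 1) - X * x → c = 0) :=
  stmt4_general n
end

section
/- For every positive odd integer m there exist integers a_m, c_m such that for all primes p ≥ 5: Σ_{k=0}^{(p-1)/2} (-1)^k (4k+1)^m ((1/2)_k/(1)_k)^3 ≡ a_m·( p·(-1)^{(p-1)/2} + p^3 E_{p-3} ) + p^3 c_m (mod p^4), where E_n denotes the Euler numbers and the congruence is in the p-adic integers. -/
/-- The Euler numbers, defined by 2/(e^x + e^{-x}) = Σ E_n x^n/n!, i.e. via the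
convolution identity with cosh: Σ_{k=0}^n C(n,k)·((1+(-1)^{n-k})/2)·E_k = [n = 0]. -/
def eulerNumber : ℕ → ℚ
  | 0 => 1
  | (n + 1) =>
      -∑ k : Fin (n + 1),
        ((n + 1).choose k : ℚ) * ((1 + (-1 : ℚ) ^ (n + 1 - (k : ℕ))) / 2) * eulerNumber k
decreasing_by exact k.isLt

/- Write `p = 2N + 1` and `t_k = (-1)^k ((1/2)_k / (1)_k)^3`. By a WZ pair, `∑ t_k (4k + 1)` is
`F(N, N)`, which is `≡ p (-1)^N (mod p^4)` because `∑_{j ≤ N} 1/j^2 ≡ 0 (mod p)`, plus values of `G`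
divisible by `p^3`. Modulo `p`, their sum over `p^3` is a sum of reciprocals of binomial
coefficients, which induction on `N` turns into `∑_{j ≤ N} (-1)^j / j^2`. This is a multiple of
`E_{p-3}` modulo `p`: with `E_n(x)` the Euler polynomials, `P_n(x) = 2^n E_n((x + 1) / 2)` satisfies
`P_n(x + 1) + P_n(x - 1) = 2 x^n`, so that `E_{p-3} = P_{p-3}(0) ≡ P_{p-3}(p)` is an alternating sum
of powers `(2j)^(p-3) ≡ 1 / (2j)^2`. The odd exponents `m ≥ 3` reduce to `m = 1`, since
`∑ t_k f(4k + 1)` telescopes to a multiple of `p^3` when `f` is the odd part of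
`(x + 1)^3 (x + 2)^(2j)`; these polynomials, the even powers of `x` and `x` itself span `ℤ[x]`. -/

open Finset Polynomial
open scoped Nat

section Residue

variable {p : ℕ} [Fact p.Prime] {x y : ℚ} {z w : ZMod p}

/-- The rational number `x` is `p`-integral and reduces to `z` modulo `p`. Integrality is phrased as
lying in `ℤ_[p]`, whose ring homomorphism onto `ZMod p` provides the reduction. -/
def HasResidue (x : ℚ) (z : ZMod p) : Prop :=
  ∃ u : ℤ_[p], (u : ℚ_[p]) = x ∧ PadicInt.toZMod u = z

namespace HasResidue

lemma intCast (a : ℤ) : HasResidue (p := p) a a := ⟨a, by simp, by simp⟩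

lemma natCast (a : ℕ) : HasResidue (p := p) a a := ⟨a, by simp, by simp⟩

lemma zero : HasResidue (p := p) 0 0 := ⟨0, by simp, by simp⟩

lemma one : HasResidue (p := p) 1 1 := ⟨1, by simp, by simp⟩

lemma prime : HasResidue (p : ℚ) (0 : ZMod p) := by
  simpa only [CharP.cast_eq_zero] using natCast (p := p) p

lemma add (hx : HasResidue x z) (hy : HasResidue y w) : HasResidue (x + y) (z + w) := by
  obtain ⟨u, hu, rfl⟩ := hx
  obtain ⟨v, hv, rfl⟩ := hy
  exact ⟨u + v, by push_cast [hu, hv]; rfl, map_add _ _ _⟩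

lemma mul (hx : HasResidue x z) (hy : HasResidue y w) : HasResidue (x * y) (z * w) := by
  obtain ⟨u, hu, rfl⟩ := hx
  obtain ⟨v, hv, rfl⟩ := hy
  exact ⟨u * v, by push_cast [hu, hv]; rfl, map_mul _ _ _⟩

lemma neg (hx : HasResidue x z) : HasResidue (-x) (-z) := by
  obtain ⟨u, hu, rfl⟩ := hx
  exact ⟨-u, by push_cast [hu]; rfl, map_neg _ _⟩

lemma sub (hx : HasResidue x z) (hy : HasResidue y w) : HasResidue (x - y) (z - w) := by
  simpa only [sub_eq_add_neg] using hx.add hy.neg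

lemma pow (hx : HasResidue x z) (n : ℕ) : HasResidue (x ^ n) (z ^ n) := by
  obtain ⟨u, hu, rfl⟩ := hx
  exact ⟨u ^ n, by push_cast [hu]; rfl, map_pow _ _ _⟩

lemma inv (hx : HasResidue x z) (hz : z ≠ 0) : HasResidue x⁻¹ z⁻¹ := by
  obtain ⟨u, hu, rfl⟩ := hx
  have hunit : IsUnit u := by
    rwa [← IsLocalRing.notMem_maximalIdeal, ← PadicInt.ker_toZMod, RingHom.mem_ker]
  obtain ⟨v, huv⟩ := hunit.exists_right_inv
  refine ⟨v, ?_, eq_inv_of_mul_eq_one_right ?_⟩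
  · rw [Rat.cast_inv, ← hu]
    exact eq_inv_of_mul_eq_one_right (by rw [← PadicInt.coe_mul, huv, PadicInt.coe_one])
  · rw [← map_mul, huv, map_one]

lemma div (hx : HasResidue x z) (hy : HasResidue y w) (hw : w ≠ 0) :
    HasResidue (x / y) (z / w) := by
  simpa only [div_eq_mul_inv] using hx.mul (hy.inv hw)

lemma sum {ι : Type*} {s : Finset ι} {f : ι → ℚ} {g : ι → ZMod p}
    (h : ∀ i ∈ s, HasResidue (f i) (g i)) : HasResidue (∑ i ∈ s, f i) (∑ i ∈ s, g i) := by
  classical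
  induction s using Finset.induction_on with
  | empty => simpa using zero (p := p)
  | insert i s hi ih =>
    rw [sum_insert hi, sum_insert hi]
    exact (h i (mem_insert_self i s)).add (ih fun j hj ↦ h j (mem_insert_of_mem hj))

lemma aeval (hx : HasResidue x z) (f : ℤ[X]) :
    HasResidue (Polynomial.aeval x f) (Polynomial.aeval z f) := by
  induction f using Polynomial.induction_on' with
  | add f g hf hg => simpa only [map_add] using hf.add hg
  | monomial n a => simpa [aeval_monomial] using (intCast a).mul (hx.pow n)

lemma ascPochhammer_eval (hx : HasResidue x z) (k : ℕ) :
    HasResidue ((ascPochhammer ℚ k).eval x) ((ascPochhammer (ZMod p) k).eval z) := by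
  simpa only [← eval_map_algebraMap, ascPochhammer_map] using hx.aeval (ascPochhammer ℤ k)

lemma unique (hz : HasResidue x z) (hw : HasResidue x w) : z = w := by
  obtain ⟨u, hu, rfl⟩ := hz
  obtain ⟨v, hv, rfl⟩ := hw
  rw [PadicInt.ext (hu.trans hv.symm)]

end HasResidue

/-- Congruence modulo `p ^ n` of rational numbers: the difference `x - y`, which is all that has to
be `p`-integral, lies in `p ^ n ℤ_[p]`. -/
def PadicModEq (p : ℕ) [Fact p.Prime] (n : ℕ) (x y : ℚ) : Prop :=
  ∃ u : ℤ_[p], ((x - y : ℚ) : ℚ_[p]) = p ^ n * u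

namespace PadicModEq

variable {n : ℕ} {x' y' : ℚ}

lemma refl (x : ℚ) : PadicModEq p n x x := ⟨0, by simp⟩

lemma trans {t : ℚ} (hxy : PadicModEq p n x y) (hyt : PadicModEq p n y t) : PadicModEq p n x t := by
  obtain ⟨u, hu⟩ := hxy
  obtain ⟨v, hv⟩ := hyt
  refine ⟨u + v, ?_⟩
  push_cast at hu hv ⊢
  linear_combination hu + hv

instance : IsTrans ℚ (PadicModEq p n) := ⟨fun _ _ _ ↦ trans⟩

lemma add (h : PadicModEq p n x y) (h' : PadicModEq p n x' y') :
    PadicModEq p n (x + x') (y + y') := by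
  obtain ⟨u, hu⟩ := h
  obtain ⟨v, hv⟩ := h'
  refine ⟨u + v, ?_⟩
  push_cast at hu hv ⊢
  linear_combination hu + hv

lemma mul_left {c : ℚ} {z : ZMod p} (hc : HasResidue c z) (h : PadicModEq p n x y) :
    PadicModEq p n (c * x) (c * y) := by
  obtain ⟨v, hv, -⟩ := hc
  obtain ⟨u, hu⟩ := h
  refine ⟨v * u, ?_⟩
  push_cast at hu ⊢
  linear_combination (v : ℚ_[p]) * hu - (x - y : ℚ_[p]) * hv

lemma sum {ι : Type*} {s : Finset ι} {f g : ι → ℚ} (h : ∀ i ∈ s, PadicModEq p n (f i) (g i)) :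
    PadicModEq p n (∑ i ∈ s, f i) (∑ i ∈ s, g i) := by
  classical
  induction s using Finset.induction_on with
  | empty => exact refl _
  | insert i s hi ih =>
    rw [sum_insert hi, sum_insert hi]
    exact (h i (mem_insert_self i s)).add (ih fun j hj ↦ h j (mem_insert_of_mem hj))

lemma prime_pow_mul (hx : HasResidue x z) (hy : HasResidue y z) :
    PadicModEq p (n + 1) (p ^ n * x) (p ^ n * y) := by
  obtain ⟨u, hu, rfl⟩ := hx
  obtain ⟨v, hv, huv⟩ := hy
  have hmem : u - v ∈ RingHom.ker (PadicInt.toZMod (p := p)) := by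
    rw [RingHom.mem_ker, map_sub, huv, sub_self]
  rw [PadicInt.ker_toZMod, PadicInt.maximalIdeal_eq_span_p, Ideal.mem_span_singleton] at hmem
  obtain ⟨t, ht⟩ := hmem
  have ht' : (u - v : ℚ_[p]) = p * t := mod_cast congrArg ((↑) : ℤ_[p] → ℚ_[p]) ht
  refine ⟨t, ?_⟩
  push_cast
  linear_combination (p : ℚ_[p]) ^ n * (ht' - hu + hv)

lemma eq_or_le_padicValRat (h : PadicModEq p n x y) : x = y ∨ (n : ℤ) ≤ padicValRat p (x - y) := by
  obtain ⟨u, hu⟩ := h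
  refine or_iff_not_imp_left.2 fun hxy ↦ ?_
  have hne : (p ^ n * u : ℚ_[p]) ≠ 0 := by
    rw [← hu]
    exact_mod_cast sub_ne_zero.2 hxy
  rw [← Padic.valuation_ratCast, hu, Padic.valuation_mul (left_ne_zero_of_mul hne)
    (right_ne_zero_of_mul hne), Padic.valuation_pow, Padic.valuation_p, mul_one]
  exact le_add_of_nonneg_right PadicInt.valuation_coe_nonneg

lemma prod_one_add_prime_pow_mul {ι : Type*} {s : Finset ι} {f : ι → ℚ} {g : ι → ZMod p}
    (h : ∀ i ∈ s, HasResidue (f i) (g i)) :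
    PadicModEq p (2 * n) (∏ i ∈ s, (1 + p ^ n * f i)) (1 + p ^ n * ∑ i ∈ s, f i) := by
  classical
  induction s using Finset.induction_on with
  | empty => simpa using refl _
  | insert i s hi ih =>
    rw [prod_insert hi, sum_insert hi]
    have hs : ∀ j ∈ s, HasResidue (f j) (g j) := fun j hj ↦ h j (mem_insert_of_mem hj)
    have hfi := h i (mem_insert_self i s)
    obtain ⟨v, hv, -⟩ := hfi.mul (HasResidue.sum hs)
    refine (mul_left (HasResidue.one.add ((HasResidue.prime.pow n).mul hfi)) (ih hs)).trans ⟨v, ?_⟩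
    rw [hv]
    push_cast
    ring

end PadicModEq

end Residue

section WilfZeilberger

/-- The rising factorial `(1/2)_k`. -/
noncomputable def halfRising (k : ℕ) : ℚ := (ascPochhammer ℚ k).eval (1 / 2)

lemma halfRising_zero : halfRising 0 = 1 := by simp [halfRising]

lemma halfRising_succ (k : ℕ) : halfRising (k + 1) = halfRising k * (1 / 2 + k) :=
  ascPochhammer_succ_eval k (1 / 2)

lemma halfRising_ne_zero (k : ℕ) : halfRising k ≠ 0 := (ascPochhammer_pos k _ (by norm_num)).ne'

lemma halfRising_eq_prod (k : ℕ) : halfRising k = ∏ i ∈ range k, ((1 : ℚ) / 2 + i) := by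
  induction k with
  | zero => simp [halfRising_zero]
  | succ k ih => rw [halfRising_succ, ih, prod_range_succ]

lemma halfRising_add (m k : ℕ) :
    halfRising (m + k) = halfRising m * (ascPochhammer ℚ k).eval (1 / 2 + m : ℚ) := by
  simp [halfRising, ← ascPochhammer_mul]

/-- The summand `(-1)^k ((1/2)_k / (1)_k)^3` of Van Hamme's supercongruence (B.2), stripped of its
polynomial factor `4 * k + 1`. -/
noncomputable def vanHammeTerm (k : ℕ) : ℚ := (-1) ^ k * (halfRising k / k !) ^ 3

lemma vanHammeTerm_succ (k : ℕ) :
    8 * ((k : ℚ) + 1) ^ 3 * vanHammeTerm (k + 1) = -(2 * k + 1) ^ 3 * vanHammeTerm k := by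
  unfold vanHammeTerm
  rw [halfRising_succ, Nat.factorial_succ]
  have : (k ! : ℚ) ≠ 0 := mod_cast k.factorial_ne_zero
  push_cast
  field_simp
  ring

/-- The first member
`F(n, k) = (-1)^(n+k) (4n+1) (1/2)_n^2 (1/2)_{n+k} / ((1)_n^2 (1)_{n-k} (1/2)_k^2)` of a WZ pair
whose row `k = 0` is `vanHammeTerm n * (4 * n + 1)`. The factor `1 / (1)_{n-k}` is written
`n.descFactorial k / n !`, so that it vanishes for `k > n`. -/
noncomputable def wzF (n k : ℕ) : ℚ :=
  (-1) ^ (n + k) * (4 * n + 1) * halfRising n ^ 2 * halfRising (n + k) * n.descFactorial k /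
    ((n ! : ℚ) ^ 3 * halfRising k ^ 2)

/-- The second member `G` of the WZ pair of `wzF`, with `k` shifted: `wzG n k` is `G(n, k + 1)` in
the normalisation `F(n, k - 1) - F(n, k) = G(n + 1, k) - G(n, k)`. -/
noncomputable def wzG (n k : ℕ) : ℚ :=
  (-1) ^ (n + k + 1) * 2 * halfRising n ^ 2 * halfRising (n + k) * n.descFactorial (k + 1) * n ^ 2 /
    ((n ! : ℚ) ^ 3 * halfRising (k + 1) ^ 2)

lemma cast_descFactorial_succ {R : Type*} [CommRing R] (n k : ℕ) :
    (n.descFactorial (k + 1) : R) = n.descFactorial k * (n - k) := by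
  simp only [← descPochhammer_eval_eq_descFactorial, descPochhammer_succ_eval]

lemma wzF_sub_wzF_succ (n k : ℕ) : wzF n k - wzF n (k + 1) = wzG (n + 1) k - wzG n k := by
  unfold wzF wzG
  rw [cast_descFactorial_succ n k, Nat.succ_descFactorial_succ, Nat.factorial_succ,
    Nat.add_right_comm n 1 k, ← Nat.add_assoc n k 1, halfRising_succ, halfRising_succ,
    halfRising_succ]
  have : (n ! : ℚ) ≠ 0 := mod_cast n.factorial_ne_zero
  have := halfRising_ne_zero k
  have : (1 / 2 + k : ℚ) ≠ 0 := by positivity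
  push_cast
  rw [pow_succ, pow_succ]
  field_simp
  ring

lemma sum_wzF_eq_add_wzG (N k : ℕ) :
    ∑ n ∈ range (N + 1), wzF n k = ∑ n ∈ range (N + 1), wzF n (k + 1) + wzG (N + 1) k := by
  have hG₀ : wzG 0 k = 0 := by simp [wzG]
  rw [← sub_eq_iff_eq_add', ← sum_sub_distrib, sum_congr rfl fun n _ ↦ wzF_sub_wzF_succ n k,
    sum_range_sub (wzG · k), hG₀, sub_zero]

lemma sum_wzF_zero (N K : ℕ) :
    ∑ n ∈ range (N + 1), wzF n 0 =
      ∑ n ∈ range (N + 1), wzF n K + ∑ k ∈ range K, wzG (N + 1) k := by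
  induction K with
  | zero => simp
  | succ K ih => rw [ih, sum_range_succ _ K, sum_wzF_eq_add_wzG N K]; ring

lemma sum_vanHammeTerm_mul_eq_wzF_add_sum_wzG (N : ℕ) :
    ∑ k ∈ range (N + 1), vanHammeTerm k * (4 * k + 1) =
      wzF N N + ∑ k ∈ range N, wzG (N + 1) k := by
  have hF₀ (n : ℕ) : vanHammeTerm n * (4 * n + 1) = wzF n 0 := by
    simp only [vanHammeTerm, wzF, halfRising_zero, Nat.descFactorial_zero, add_zero]
    field_simp
    push_cast
    ring
  have hF (n : ℕ) (hn : n ∈ range N) : wzF n N = 0 := by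
    simp [wzF, Nat.descFactorial_of_lt (mem_range.1 hn)]
  rw [sum_congr rfl fun n _ ↦ hF₀ n, sum_wzF_zero N N, sum_range_succ, sum_eq_zero hF, zero_add]

lemma ascPochhammer_eval_sub_natCast {R : Type*} [CommRing R] (c : R) (N : ℕ) :
    (ascPochhammer R (2 * N + 1)).eval (c - N) =
      c * ∏ j ∈ range N, (c ^ 2 - ((j : R) + 1) ^ 2) := by
  induction N with
  | zero => simp
  | succ N ih =>
    rw [show 2 * (N + 1) + 1 = 2 * N + 1 + 1 + 1 by ring, ascPochhammer_succ_eval,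
      ascPochhammer_succ_left, prod_range_succ, ← mul_assoc, ← ih]
    simp only [eval_mul, eval_X, eval_comp, eval_add, eval_one]
    push_cast
    rw [show c - (N + 1) + 1 = c - (N : R) by ring]
    ring

lemma wzF_self (N : ℕ) :
    wzF N N = (-1) ^ N * (2 * N + 1) *
      ∏ j ∈ range N, (1 + (2 * N + 1 : ℚ) ^ 2 * (-(1 / 4) * (((j : ℚ) + 1) ^ 2)⁻¹)) := by
  have hN : (N ! : ℚ) ≠ 0 := mod_cast N.factorial_ne_zero
  have hF : wzF N N = 2 * halfRising (2 * N + 1) / (N ! : ℚ) ^ 2 := by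
    have := halfRising_ne_zero N
    rw [wzF, Nat.descFactorial_self, ← two_mul, halfRising_succ, Even.neg_one_pow ⟨N, two_mul N⟩]
    field_simp
    push_cast
    ring
  have hprod : halfRising (2 * N + 1) =
      (2 * N + 1) / 2 * ∏ j ∈ range N, (((2 * N + 1) / 2 : ℚ) ^ 2 - ((j : ℚ) + 1) ^ 2) := by
    rw [← ascPochhammer_eval_sub_natCast, halfRising]
    congr 1
    ring
  have hfact : (N ! : ℚ) ^ 2 = ∏ j ∈ range N, ((j : ℚ) + 1) ^ 2 := by
    rw [prod_pow, ← prod_range_add_one_eq_factorial]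
    push_cast
    rfl
  have hsign : (-1 : ℚ) ^ N = ∏ _j ∈ range N, -1 := by simp
  rw [hF, hprod, hfact, hsign, mul_right_comm _ (2 * N + 1 : ℚ), ← prod_mul_distrib,
    ← mul_assoc, mul_div_assoc, ← prod_div_distrib,
    mul_div_cancel₀ _ (two_ne_zero' ℚ), mul_comm]
  congr 1
  refine prod_congr rfl fun j _ ↦ ?_
  field_simp
  ring

lemma wzG_succ_eq (N k : ℕ) :
    wzG (N + 1) k = (2 * N + 1) ^ 3 * (1 / 4 * ((-1) ^ (N + k) * (halfRising N / N !) ^ 3 *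
      ((ascPochhammer ℚ k).eval ((2 * N + 1) * (1 / 2) + 1 : ℚ) * N.descFactorial k /
        halfRising (k + 1) ^ 2))) := by
  have : (N ! : ℚ) ≠ 0 := mod_cast N.factorial_ne_zero
  have := halfRising_ne_zero (k + 1)
  have hsign : (-1 : ℚ) ^ (N + 1 + k + 1) = (-1) ^ (N + k) := by ring
  rw [wzG, halfRising_add (N + 1), halfRising_succ N, Nat.succ_descFactorial_succ,
    Nat.factorial_succ, hsign]
  push_cast
  rw [show (1 / 2 + (N + 1) : ℚ) = (2 * N + 1) * (1 / 2) + 1 by ring]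
  field_simp
  ring

end WilfZeilberger

section BinomialSums

lemma inv_succ_mul_choose_succ {N i : ℕ} (hi : i < N) :
    (((i : ℚ) + 1) * (N + 1).choose (i + 1))⁻¹ =
      (((i : ℚ) + 1) * N.choose (i + 1))⁻¹ * (1 - (i + 1) / (N + 1)) := by
  have hchoose : (N.choose (i + 1) : ℚ) ≠ 0 := mod_cast (Nat.choose_pos hi).ne'
  have hchoose' : ((N + 1).choose (i + 1) : ℚ) ≠ 0 := mod_cast (Nat.choose_pos (by lia)).ne'
  have h : (N.choose (i + 1) : ℚ) * (N + 1) = (N + 1).choose (i + 1) * (N - i) := by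
    have h := Nat.choose_mul_succ_eq N (i + 1)
    rw [Nat.add_sub_add_right] at h
    rw [← Nat.cast_sub hi.le]
    exact_mod_cast h
  field_simp
  linear_combination h

lemma sum_neg_one_pow_inv_mul_choose (N : ℕ) :
    ∑ i ∈ range N, (-1 : ℚ) ^ (i + 1) * (((i : ℚ) + 1) * N.choose (i + 1))⁻¹ =
      ((-1) ^ N - 1) / (N + 1) := by
  let u (i : ℕ) : ℚ := (-1) ^ i * ((N + 1) * (N.choose i : ℚ))⁻¹
  have hstep (i : ℕ) (hi : i ∈ range N) :
      (-1 : ℚ) ^ (i + 1) * (((i : ℚ) + 1) * N.choose (i + 1))⁻¹ = u (i + 1) - u i := by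
    have hi := mem_range.1 hi
    have hchoose : (N.choose i : ℚ) ≠ 0 := mod_cast (Nat.choose_pos hi.le).ne'
    have hchoose' : (N.choose (i + 1) : ℚ) ≠ 0 := mod_cast (Nat.choose_pos hi).ne'
    have h : (N.choose (i + 1) : ℚ) * (i + 1) = N.choose i * (N - i) := by
      rw [← Nat.cast_sub hi.le]
      exact_mod_cast Nat.choose_succ_right_eq N i
    simp only [u]
    field_simp
    linear_combination (-1) ^ i * h
  rw [sum_congr rfl hstep, sum_range_sub]
  simp only [u, Nat.choose_self, Nat.choose_zero_right]
  field_simp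
  simp

lemma sum_neg_one_pow_inv_sq_mul_choose (N : ℕ) :
    ∑ i ∈ range N, (-1 : ℚ) ^ (i + 1) * (((i : ℚ) + 1) ^ 2 * N.choose (i + 1))⁻¹ =
      ∑ i ∈ range N, (((i : ℚ) + 1) ^ 2)⁻¹ +
        2 * ∑ i ∈ range N, (-1) ^ (i + 1) * (((i : ℚ) + 1) ^ 2)⁻¹ := by
  induction N with
  | zero => simp
  | succ N ih =>
    have hstep (i : ℕ) (hi : i ∈ range N) :
        (-1 : ℚ) ^ (i + 1) * (((i : ℚ) + 1) ^ 2 * (N + 1).choose (i + 1))⁻¹ =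
          (-1 : ℚ) ^ (i + 1) * (((i : ℚ) + 1) ^ 2 * N.choose (i + 1))⁻¹ -
            (N + 1 : ℚ)⁻¹ * ((-1 : ℚ) ^ (i + 1) * (((i : ℚ) + 1) * N.choose (i + 1))⁻¹) := by
      rw [sq, mul_assoc, mul_inv, inv_succ_mul_choose_succ (mem_range.1 hi)]
      have : (N.choose (i + 1) : ℚ) ≠ 0 := mod_cast (Nat.choose_pos (mem_range.1 hi)).ne'
      field_simp
    rw [sum_range_succ, sum_congr rfl hstep, sum_sub_distrib, ← mul_sum, ih,
      sum_neg_one_pow_inv_mul_choose, Nat.choose_self, sum_range_succ _ N, sum_range_succ _ N]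
    field_simp
    ring

lemma sum_inv_sq_mul_choose_reflect (N : ℕ) :
    ∑ k ∈ range N, (-1 : ℚ) ^ k * (((N : ℚ) - k) ^ 2 * N.choose k)⁻¹ =
      (-1) ^ N * ∑ i ∈ range N, (-1 : ℚ) ^ (i + 1) * (((i : ℚ) + 1) ^ 2 * N.choose (i + 1))⁻¹ := by
  rw [← sum_range_reflect, mul_sum]
  refine sum_congr rfl fun i hi ↦ ?_
  have hi : i + 1 ≤ N := mem_range.1 hi
  have hsign : (-1 : ℚ) ^ (N - (i + 1)) = (-1) ^ N * (-1) ^ (i + 1) := by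
    obtain ⟨d, rfl⟩ := Nat.exists_eq_add_of_le hi
    rw [Nat.add_sub_cancel_left, pow_add, mul_right_comm, ← mul_pow, neg_one_mul, neg_neg, one_pow,
      one_mul]
  rw [Nat.sub_sub, add_comm 1, hsign, Nat.choose_symm hi, Nat.cast_sub hi, sub_sub_cancel]
  push_cast
  ring

end BinomialSums

section EulerNumbers

lemma eulerNumber_zero : eulerNumber 0 = 1 := by rw [eulerNumber]

lemma eulerNumber_succ (n : ℕ) :
    eulerNumber (n + 1) = -∑ k ∈ range (n + 1),
      ((n + 1).choose k : ℚ) * ((1 + (-1 : ℚ) ^ (n + 1 - k)) / 2) * eulerNumber k := by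
  rw [eulerNumber, sum_range]

lemma sum_choose_mul_eulerNumber {n : ℕ} (hn : n ≠ 0) :
    ∑ k ∈ range (n + 1), (n.choose k : ℚ) * (1 + (-1 : ℚ) ^ (n - k)) * eulerNumber k = 0 := by
  obtain ⟨n, rfl⟩ := Nat.exists_eq_succ_of_ne_zero hn
  rw [sum_range_succ, Nat.succ_eq_add_one, eulerNumber_succ, Nat.choose_self, Nat.sub_self,
    mul_neg, mul_sum, ← sub_eq_add_neg, ← sum_sub_distrib]
  refine sum_eq_zero fun k _ ↦ ?_
  push_cast
  ring

lemma eulerNumber_of_odd {n : ℕ} (hn : Odd n) : eulerNumber n = 0 := by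
  induction n using Nat.strong_induction_on with
  | _ n ih =>
    obtain ⟨n, rfl⟩ := Nat.exists_eq_succ_of_ne_zero hn.pos.ne'
    rw [Nat.succ_eq_add_one, eulerNumber_succ, neg_eq_zero]
    refine sum_eq_zero fun k hk ↦ ?_
    have hk := mem_range.1 hk
    rcases k.even_or_odd with hk' | hk'
    · simp [(Nat.Odd.sub_even hk.le hn hk').neg_one_pow]
    · simp [ih k hk hk']

lemma eulerNumber_mem_range_intCast (n : ℕ) : eulerNumber n ∈ (Int.castRingHom ℚ).range := by
  induction n using Nat.strong_induction_on with
  | _ n ih =>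
    rcases n with - | n
    · exact eulerNumber_zero ▸ one_mem _
    rw [eulerNumber_succ]
    refine neg_mem <| sum_mem fun k hk ↦ mul_mem (mul_mem (natCast_mem _ _) ?_) <|
      ih k (mem_range.1 hk)
    rcases (n + 1 - k).even_or_odd with h | h
    · simp [h.neg_one_pow]
    · simp [h.neg_one_pow]

/-- The polynomial `2^n E_n((X + 1) / 2)`, where `E_n(X)` is the Euler polynomial. In this
normalisation it is the Appell sequence of the Euler numbers. -/
noncomputable def scaledEulerPoly (n : ℕ) : ℚ[X] :=
  ∑ k ∈ range (n + 1), C (n.choose k * eulerNumber k) * X ^ (n - k)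

lemma derivative_scaledEulerPoly_succ (n : ℕ) :
    derivative (scaledEulerPoly (n + 1)) = C (n + 1 : ℚ) * scaledEulerPoly n := by
  rw [scaledEulerPoly, scaledEulerPoly, sum_range_succ, derivative_add, derivative_sum, mul_sum]
  simp only [derivative_C_mul, derivative_X_pow, Nat.sub_self, Nat.cast_zero, map_zero, zero_mul,
    mul_zero, add_zero]
  refine sum_congr rfl fun k _ ↦ ?_
  have hchoose : ((n + 1).choose k : ℚ) * (n + 1 - k : ℕ) = (n + 1) * n.choose k := by
    rw [mul_comm (n + 1 : ℚ)]
    exact_mod_cast (Nat.choose_mul_succ_eq n k).symm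
  rw [show n + 1 - k - 1 = n - k by lia, ← mul_assoc, ← mul_assoc, ← C_mul, ← C_mul]
  congr 2
  linear_combination eulerNumber k * hchoose

lemma eval_zero_scaledEulerPoly (n : ℕ) : (scaledEulerPoly n).eval 0 = eulerNumber n := by
  rw [scaledEulerPoly, eval_finsetSum, sum_range_succ, sum_eq_zero]
  · simp
  · intro k hk
    simp [Nat.sub_ne_zero_of_lt (mem_range.1 hk)]

lemma scaledEulerPoly_comp_add_comp (n : ℕ) :
    (scaledEulerPoly n).comp (X + 1) + (scaledEulerPoly n).comp (X - 1) = 2 * X ^ n := by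
  induction n with
  | zero => simp [scaledEulerPoly, eulerNumber_zero, one_add_one_eq_two]
  | succ n ih =>
    rw [← sub_eq_zero]
    set D := (scaledEulerPoly (n + 1)).comp (X + 1) + (scaledEulerPoly (n + 1)).comp (X - 1) -
      2 * X ^ (n + 1) with hD
    have hD' : derivative D = 0 := by
      simp only [hD, derivative_sub, derivative_add, derivative_comp,
        derivative_scaledEulerPoly_succ, mul_comp, C_comp, derivative_mul, derivative_X_pow_succ,
        derivative_X, derivative_one, derivative_ofNat]
      linear_combination C (n + 1 : ℚ) * ih
    have hD₀ : D.eval 0 = 0 := by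
      have h := sum_choose_mul_eulerNumber n.succ_ne_zero
      simp only [hD, scaledEulerPoly, eval_sub, eval_add, eval_comp, eval_X, eval_one, zero_add,
        zero_sub, eval_finsetSum, eval_mul, eval_C, eval_pow, one_pow, eval_ofNat, ne_eq,
        n.succ_ne_zero, not_false_eq_true, zero_pow, mul_zero, sub_zero, ← sum_add_distrib]
      rw [← h]
      refine sum_congr rfl fun k _ ↦ ?_
      ring
    rw [eq_C_of_natDegree_eq_zero (derivative_eq_zero.1 hD'),
      coeff_zero_eq_eval_zero, hD₀, C_0]

lemma eval_one_scaledEulerPoly {n : ℕ} (hn : Even n) (hn₀ : n ≠ 0) :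
    (scaledEulerPoly n).eval 1 = 0 := by
  refine (mul_eq_zero.1 ?_).resolve_left (two_ne_zero' ℚ)
  rw [← sum_choose_mul_eulerNumber hn₀, scaledEulerPoly, eval_finsetSum, mul_sum]
  refine sum_congr rfl fun k hk ↦ ?_
  have hk : k ≤ n := Nat.lt_succ_iff.1 (mem_range.1 hk)
  rcases k.even_or_odd with hk' | hk'
  · rw [((Nat.even_sub hk).2 (iff_of_true hn hk')).neg_one_pow, eval_mul, eval_C, eval_pow,
      eval_X, one_pow]
    ring
  · simp [eulerNumber_of_odd hk']

lemma eval_scaledEulerPoly_two_mul_add_one {n : ℕ} (hn : Even n) (hn₀ : n ≠ 0) (N : ℕ) :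
    (scaledEulerPoly n).eval (2 * N + 1 : ℚ) =
      (-1) ^ N * (2 * ∑ j ∈ range N, (-1 : ℚ) ^ (j + 1) * (2 * (j + 1)) ^ n) := by
  induction N with
  | zero => simp [eval_one_scaledEulerPoly hn hn₀]
  | succ N ih =>
    have h := congrArg (eval (2 * (N + 1) : ℚ)) (scaledEulerPoly_comp_add_comp n)
    simp only [eval_add, eval_comp, eval_X, eval_one, eval_sub, eval_mul, eval_ofNat, eval_pow]
      at h
    rw [show (2 * (N + 1) - 1 : ℚ) = 2 * N + 1 by ring, ih] at h
    have hsign : ((-1 : ℚ) ^ N) ^ 2 = 1 := by rw [pow_right_comm, neg_one_sq, one_pow]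
    rw [sum_range_succ]
    push_cast
    linear_combination h - 2 * (2 * (N + 1 : ℚ)) ^ n * hsign

lemma scaledEulerPoly_mem_lifts (n : ℕ) : scaledEulerPoly n ∈ lifts (Int.castRingHom ℚ) := by
  refine sum_mem fun k _ ↦ mul_mem ?_ (X_pow_mem_lifts _ _)
  obtain ⟨e, he⟩ := eulerNumber_mem_range_intCast k
  rw [← he]
  simpa using C_mem_lifts (Int.castRingHom ℚ) (n.choose k * e)

end EulerNumbers

section ResiduesModPrime

variable {p N : ℕ}

lemma sum_zmod_of_even {A : Type*} [AddCommMonoid A] [NeZero p] (hp : p = 2 * N + 1)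
    {f : ZMod p → A} (hf : ∀ z, f (-z) = f z) :
    ∑ z, f z = f 0 + 2 • ∑ j ∈ range N, f (j + 1) := by
  have hrange : ∑ z, f z = ∑ j ∈ range (2 * N + 1), f j :=
    sum_nbij' ZMod.val Nat.cast (fun z _ ↦ mem_range.2 (hp ▸ z.val_lt)) (fun _ _ ↦ mem_univ _)
      (fun z _ ↦ z.natCast_zmod_val) (fun j hj ↦ ZMod.val_cast_of_lt (hp ▸ mem_range.1 hj))
      fun z _ ↦ by rw [z.natCast_zmod_val]
  have hreflect : ∑ j ∈ range N, f ((N + j : ℕ) + 1) = ∑ j ∈ range N, f (j + 1) := by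
    rw [← sum_range_reflect]
    refine sum_congr rfl fun j hj ↦ ?_
    have hj := mem_range.1 hj
    have hneg : ((N + (N - 1 - j) : ℕ) + 1 : ZMod p) = -(j + 1) := by
      rw [eq_neg_iff_add_eq_zero, ← CharP.cast_eq_zero (ZMod p) p, hp]
      norm_cast
      congr 1
      lia
    rw [hneg, hf]
  rw [hrange, sum_range_succ', two_mul N, sum_range_add, two_nsmul, add_comm]
  push_cast at hreflect ⊢
  rw [hreflect]

lemma natCast_zmod_ne_zero {j : ℕ} (hj : 0 < j) (hjp : j < p) : (j : ZMod p) ≠ 0 := by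
  rw [Ne, ZMod.natCast_eq_zero_iff]
  exact Nat.not_dvd_of_pos_of_lt hj hjp

lemma natCast_sub_zmod_ne_zero {k n : ℕ} (hk : k < n) (hn : n < p) : (n - k : ZMod p) ≠ 0 := by
  rw [← Nat.cast_sub hk.le]
  exact natCast_zmod_ne_zero (Nat.sub_pos_of_lt hk) (by lia)

variable [Fact p.Prime]

lemma two_zmod_ne_zero (hp : p = 2 * N + 1) : (2 : ZMod p) ≠ 0 := by
  have := (Fact.out : p.Prime).two_le
  exact_mod_cast natCast_zmod_ne_zero (p := p) two_pos (by lia)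

lemma factorial_zmod_ne_zero {n : ℕ} (hn : n < p) : (n ! : ZMod p) ≠ 0 := by
  rwa [Ne, ZMod.natCast_eq_zero_iff, (Fact.out : p.Prime).dvd_factorial, not_le]

lemma choose_zmod_ne_zero {n k : ℕ} (hn : n < p) (hk : k ≤ n) : (n.choose k : ZMod p) ≠ 0 := by
  refine fun h ↦ factorial_zmod_ne_zero hn ?_
  rw [← Nat.choose_mul_factorial_mul_factorial hk, Nat.cast_mul, Nat.cast_mul, h, zero_mul,
    zero_mul]

lemma pow_card_sub_three (hp : 3 ≤ p) {z : ZMod p} (hz : z ≠ 0) : z ^ (p - 3) = (z ^ 2)⁻¹ := by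
  refine eq_inv_of_mul_eq_one_left ?_
  rw [← pow_add, show p - 3 + 2 = p - 1 by lia, ZMod.pow_card_sub_one_eq_one hz]

lemma sum_inv_sq_zmod (hp : p = 2 * N + 1) (hp₅ : 5 ≤ p) :
    ∑ j ∈ range N, (((j : ZMod p) + 1) ^ 2)⁻¹ = 0 := by
  have hsum : ∑ z : ZMod p, (z ^ 2)⁻¹ = 0 := by
    rw [← FiniteField.sum_pow_lt_card_sub_one (ZMod p) 2 (by rw [ZMod.card]; lia)]
    exact Fintype.sum_equiv (Equiv.inv (ZMod p)) _ _ fun z ↦ (inv_pow z 2).symm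
  rw [sum_zmod_of_even hp fun z ↦ by rw [neg_sq]] at hsum
  simpa [two_zmod_ne_zero hp] using hsum

lemma hasResidue_inv_succ_sq (hp : p = 2 * N + 1) {j : ℕ} (hj : j ∈ range N) :
    HasResidue (((j : ℚ) + 1) ^ 2)⁻¹ (((j : ZMod p) + 1) ^ 2)⁻¹ := by
  have hj := mem_range.1 hj
  exact_mod_cast ((HasResidue.natCast (j + 1)).pow 2).inv
    (pow_ne_zero 2 (natCast_zmod_ne_zero j.succ_pos (by lia)))

lemma hasResidue_sum_inv_sq (hp : p = 2 * N + 1) (hp₅ : 5 ≤ p) :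
    HasResidue (∑ j ∈ range N, (((j : ℚ) + 1) ^ 2)⁻¹) (0 : ZMod p) :=
  sum_inv_sq_zmod hp hp₅ ▸ HasResidue.sum fun _ hj ↦ hasResidue_inv_succ_sq hp hj

lemma hasResidue_half (hp : p = 2 * N + 1) : HasResidue (1 / 2) (1 / 2 : ZMod p) :=
  HasResidue.one.div (mod_cast HasResidue.natCast 2) (two_zmod_ne_zero hp)

lemma hasResidue_quarter (hp : p = 2 * N + 1) : HasResidue (1 / 4) (1 / 4 : ZMod p) := by
  convert (hasResidue_half hp).pow 2 using 1 <;> norm_num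

lemma two_mul_quarter_zmod (hp : p = 2 * N + 1) : (2 * (1 / 4) : ZMod p) = 1 / 2 := by
  have := two_zmod_ne_zero hp
  rw [show (4 : ZMod p) = 2 * 2 by norm_num]
  field_simp

lemma half_zmod_eq_neg (hp : p = 2 * N + 1) : (1 / 2 : ZMod p) = -N := by
  have h : ((2 * N + 1 : ℕ) : ZMod p) = 0 := hp ▸ ZMod.natCast_self p
  rw [div_eq_iff (two_zmod_ne_zero hp)]
  push_cast at h
  linear_combination h

lemma hasResidue_halfRising (hp : p = 2 * N + 1) (k : ℕ) :
    HasResidue (halfRising k) ((-1) ^ k * (N.descFactorial k : ZMod p)) := by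
  have h := (hasResidue_half hp).ascPochhammer_eval k
  rwa [half_zmod_eq_neg hp, ascPochhammer_eval_neg_eq_descPochhammer,
    descPochhammer_eval_eq_descFactorial] at h

lemma hasResidue_halfRising_div_factorial (hp : p = 2 * N + 1) :
    HasResidue (halfRising N / N !) ((-1) ^ N : ZMod p) := by
  have hN : (N ! : ZMod p) ≠ 0 := factorial_zmod_ne_zero (by lia)
  have h := (hasResidue_halfRising hp N).div (HasResidue.natCast N !) hN
  rwa [Nat.descFactorial_self, mul_div_cancel_right₀ _ hN] at h

lemma hasResidue_vanHammeTerm (hp : p = 2 * N + 1) : HasResidue (vanHammeTerm N) (1 : ZMod p) := by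
  have h := (HasResidue.one.neg.pow N).mul ((hasResidue_halfRising_div_factorial hp).pow 3)
  have hsign : (-1 : ZMod p) ^ N * ((-1) ^ N) ^ 3 = 1 := by
    rw [← pow_succ', pow_right_comm, (by decide : Even (3 + 1)).neg_one_pow, one_pow]
  rwa [hsign] at h

lemma wzF_self_modEq (hp : p = 2 * N + 1) (hp₅ : 5 ≤ p) :
    PadicModEq p 4 (wzF N N) (p * (-1) ^ N) := by
  have hp' : (2 * N + 1 : ℚ) = p := mod_cast hp.symm
  have hterm (j : ℕ) (hj : j ∈ range N) :=
    (hasResidue_quarter hp).neg.mul (hasResidue_inv_succ_sq hp hj)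
  have hsum := (hasResidue_quarter hp).neg.mul (hasResidue_sum_inv_sq hp hp₅)
  rw [mul_zero] at hsum
  have hsign : HasResidue ((-1) ^ N : ℚ) ((-1) ^ N : ZMod p) := HasResidue.one.neg.pow N
  have hprod := (PadicModEq.prod_one_add_prime_pow_mul (n := 2) hterm).mul_left
    (hsign.mul HasResidue.prime)
  have hsmall := (PadicModEq.prime_pow_mul (n := 3) hsum HasResidue.zero).mul_left hsign
  calc wzF N N
    _ = (-1) ^ N * p * ∏ j ∈ range N, (1 + (p : ℚ) ^ 2 * (-(1 / 4) * (((j : ℚ) + 1) ^ 2)⁻¹)) := by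
      rw [wzF_self, hp']
    PadicModEq p 4 _ ((-1) ^ N * p * (1 + p ^ 2 * ∑ j ∈ range N,
        (-(1 / 4) * (((j : ℚ) + 1) ^ 2)⁻¹))) := hprod
    _ = p * (-1) ^ N + (-1) ^ N * (p ^ 3 * (-(1 / 4) * ∑ j ∈ range N,
        (((j : ℚ) + 1) ^ 2)⁻¹)) := by rw [← mul_sum]; ring
    PadicModEq p 4 _ (p * (-1) ^ N + (-1) ^ N * (p ^ 3 * 0)) := (PadicModEq.refl _).add hsmall
    _ = p * (-1) ^ N := by ring

lemma hasResidue_ascPochhammer_mul_descFactorial_div (hp : p = 2 * N + 1) {k : ℕ} (hk : k < N) :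
    HasResidue ((ascPochhammer ℚ k).eval (p * (1 / 2) + 1 : ℚ) * N.descFactorial k /
      halfRising (k + 1) ^ 2) (((N - k) ^ 2 * N.choose k)⁻¹ : ZMod p) := by
  have hpoch : HasResidue ((ascPochhammer ℚ k).eval (p * (1 / 2) + 1 : ℚ)) (k ! : ZMod p) := by
    have h := ((HasResidue.prime.mul (hasResidue_half hp)).add HasResidue.one).ascPochhammer_eval k
    rwa [zero_mul, zero_add, ascPochhammer_eval_one] at h
  have hsub : (N - k : ZMod p) ≠ 0 := natCast_sub_zmod_ne_zero hk (by lia)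
  have hfact : (k ! : ZMod p) ≠ 0 := factorial_zmod_ne_zero (by lia)
  have hchoose : (N.choose k : ZMod p) ≠ 0 := choose_zmod_ne_zero (by lia) hk.le
  have hdesc : (N.descFactorial k : ZMod p) = k ! * N.choose k := by
    rw [Nat.descFactorial_eq_factorial_mul_choose, Nat.cast_mul]
  have hrising : ((-1) ^ (k + 1) * N.descFactorial (k + 1) : ZMod p) ^ 2 =
      (k ! * N.choose k * (N - k)) ^ 2 := by
    rw [cast_descFactorial_succ, hdesc, mul_pow, pow_right_comm, neg_one_sq, one_pow, one_mul]
  have h := (hpoch.mul (HasResidue.natCast (N.descFactorial k))).div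
    (hrising ▸ (hasResidue_halfRising hp (k + 1)).pow 2) (by simp [hsub, hfact, hchoose])
  convert h using 1
  rw [hdesc]
  field_simp

lemma wzG_succ_modEq (hp : p = 2 * N + 1) {k : ℕ} (hk : k < N) :
    PadicModEq p 4 (wzG (N + 1) k)
      (p ^ 3 * (1 / 4 * ((-1) ^ k * (((N : ℚ) - k) ^ 2 * N.choose k)⁻¹))) := by
  have hp' : (2 * N + 1 : ℚ) = p := mod_cast hp.symm
  have hsign : (-1 : ZMod p) ^ (N + k) * ((-1) ^ N) ^ 3 = (-1) ^ k := by
    rw [pow_add, mul_right_comm, ← pow_succ', pow_right_comm,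
      (by decide : Even (3 + 1)).neg_one_pow, one_pow, one_mul]
  have hne : ((N : ZMod p) - k) ^ 2 * N.choose k ≠ 0 :=
    mul_ne_zero (pow_ne_zero 2 (natCast_sub_zmod_ne_zero hk (by lia)))
      (choose_zmod_ne_zero (by lia) hk.le)
  rw [wzG_succ_eq, hp']
  refine PadicModEq.prime_pow_mul ((hasResidue_quarter hp).mul <|
    ((HasResidue.one.neg.pow (N + k)).mul ((hasResidue_halfRising_div_factorial hp).pow 3)).mul
      (hasResidue_ascPochhammer_mul_descFactorial_div hp hk)) ?_
  rw [hsign]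
  exact (hasResidue_quarter hp).mul <| (HasResidue.one.neg.pow k).mul <|
    ((((HasResidue.natCast N).sub (HasResidue.natCast k)).pow 2).mul
      (HasResidue.natCast (N.choose k))).inv hne

lemma hasResidue_eulerNumber_of_eval {n : ℕ} {z : ZMod p}
    (h : HasResidue ((scaledEulerPoly n).eval (p : ℚ)) z) : HasResidue (eulerNumber n) z := by
  obtain ⟨f, hf⟩ := (mem_lifts _).1 (scaledEulerPoly_mem_lifts n)
  have haeval (x : ℚ) : (scaledEulerPoly n).eval x = aeval x f := by
    rw [← hf, ← eval_map_algebraMap]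
    rfl
  rw [haeval] at h
  rw [← eval_zero_scaledEulerPoly, haeval, h.unique (HasResidue.prime.aeval f)]
  exact HasResidue.zero.aeval f

lemma hasResidue_two_mul_succ_pow (hp : p = 2 * N + 1) (hp₅ : 5 ≤ p) {j : ℕ} (hj : j ∈ range N) :
    HasResidue ((2 * ((j : ℚ) + 1)) ^ (p - 3)) (1 / 4 * (((j : ZMod p) + 1) ^ 2)⁻¹) := by
  have hj := mem_range.1 hj
  have hne : (2 * (j + 1) : ZMod p) ≠ 0 := mul_ne_zero (two_zmod_ne_zero hp)
    (mod_cast natCast_zmod_ne_zero j.succ_pos (by lia))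
  have hpow : (2 * (j + 1) : ZMod p) ^ (p - 3) = 1 / 4 * (((j : ZMod p) + 1) ^ 2)⁻¹ := by
    rw [pow_card_sub_three (by lia) hne, mul_pow, mul_inv]
    norm_num
  rw [← hpow]
  exact_mod_cast (HasResidue.natCast (2 * (j + 1))).pow (p - 3)

lemma hasResidue_eulerNumber (hp : p = 2 * N + 1) (hp₅ : 5 ≤ p) :
    HasResidue (eulerNumber (p - 3)) ((-1) ^ N *
      (1 / 2 * ∑ j ∈ range N, (-1) ^ (j + 1) * (((j : ZMod p) + 1) ^ 2)⁻¹)) := by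
  have hp' : (p : ℚ) = 2 * N + 1 := mod_cast hp
  have hsum : ∑ j ∈ range N, (-1) ^ (j + 1) * (1 / 4 * (((j : ZMod p) + 1) ^ 2)⁻¹) =
      1 / 4 * ∑ j ∈ range N, (-1) ^ (j + 1) * (((j : ZMod p) + 1) ^ 2)⁻¹ := by
    rw [mul_sum]
    exact sum_congr rfl fun j _ ↦ mul_left_comm _ _ _
  refine hasResidue_eulerNumber_of_eval ?_
  rw [hp', eval_scaledEulerPoly_two_mul_add_one ⟨N - 1, by lia⟩ (by lia),
    ← two_mul_quarter_zmod hp, mul_assoc, ← hsum]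
  exact (HasResidue.one.neg.pow N).mul <| .mul (mod_cast HasResidue.natCast 2) <|
    HasResidue.sum fun j hj ↦
      (HasResidue.one.neg.pow (j + 1)).mul (hasResidue_two_mul_succ_pow hp hp₅ hj)

lemma sum_vanHammeTerm_mul_modEq (hp : p = 2 * N + 1) (hp₅ : 5 ≤ p) :
    PadicModEq p 4 (∑ k ∈ range (N + 1), vanHammeTerm k * (4 * k + 1))
      (p * (-1) ^ N + p ^ 3 * eulerNumber (p - 3)) := by
  set H := ∑ j ∈ range N, (((j : ℚ) + 1) ^ 2)⁻¹
  set A := ∑ j ∈ range N, (-1) ^ (j + 1) * (((j : ℚ) + 1) ^ 2)⁻¹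
  have hA := HasResidue.sum fun j hj ↦
    (HasResidue.one.neg.pow (p := p) (j + 1)).mul (hasResidue_inv_succ_sq hp hj)
  have hcoeff := (HasResidue.one.neg.pow N).mul <| (hasResidue_quarter hp).mul <|
    (hasResidue_sum_inv_sq hp hp₅).add ((HasResidue.natCast 2).mul hA)
  rw [zero_add, ← mul_assoc (1 / 4 : ZMod p), mul_comm (1 / 4 : ZMod p), Nat.cast_ofNat,
    Nat.cast_ofNat, two_mul_quarter_zmod hp] at hcoeff
  have hG : ∑ k ∈ range N, (p : ℚ) ^ 3 * (1 / 4 * ((-1) ^ k * (((N : ℚ) - k) ^ 2 * N.choose k)⁻¹)) =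
      p ^ 3 * ((-1) ^ N * (1 / 4 * (H + 2 * A))) := by
    rw [← mul_sum, ← mul_sum, sum_inv_sq_mul_choose_reflect, sum_neg_one_pow_inv_sq_mul_choose,
      mul_left_comm (1 / 4 : ℚ)]
  rw [sum_vanHammeTerm_mul_eq_wzF_add_sum_wzG]
  refine (wzF_self_modEq hp hp₅).add ?_
  calc ∑ k ∈ range N, wzG (N + 1) k
    PadicModEq p 4 _ (∑ k ∈ range N,
        (p : ℚ) ^ 3 * (1 / 4 * ((-1) ^ k * (((N : ℚ) - k) ^ 2 * N.choose k)⁻¹))) :=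
      PadicModEq.sum fun k hk ↦ wzG_succ_modEq hp (mem_range.1 hk)
    _ = p ^ 3 * ((-1) ^ N * (1 / 4 * (H + 2 * A))) := hG
    PadicModEq p 4 _ (p ^ 3 * eulerNumber (p - 3)) :=
      PadicModEq.prime_pow_mul hcoeff (hasResidue_eulerNumber hp hp₅)

end ResiduesModPrime

section OddPolynomials

lemma submodule_eq_top_of_forall_exists_monic {R : Type*} [CommRing R] {S : Submodule R R[X]}
    (hS : ∀ n, ∃ f ∈ S, f.Monic ∧ f.natDegree = n) : S = ⊤ := by
  nontriviality R
  choose f hfS hmonic hdeg using hS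
  let s : Sequence R := ⟨f, fun n ↦ by rw [degree_eq_natDegree (hmonic n).ne_zero, hdeg]⟩
  have hspan := s.span fun n ↦ (show (s n).leadingCoeff = 1 from hmonic n) ▸ isUnit_one
  rw [eq_top_iff, ← hspan, Submodule.span_le]
  exact Set.range_subset_iff.2 hfS

/-- The sum `∑ k ≤ N, t_k f⁻(4 * k + 1)` over the terms `t_k = vanHammeTerm k`, where
`f⁻(x) = (f(x) - f(-x)) / 2` is the odd part of `f`. -/
noncomputable def oddWeightedSum (N : ℕ) : ℤ[X] →ₗ[ℤ] ℚ :=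
  ∑ k ∈ range (N + 1), (vanHammeTerm k / 2) •
    ((aeval (4 * k + 1 : ℚ)).toLinearMap - (aeval (-(4 * k + 1) : ℚ)).toLinearMap)

lemma oddWeightedSum_apply (N : ℕ) (f : ℤ[X]) :
    oddWeightedSum N f = ∑ k ∈ range (N + 1), vanHammeTerm k / 2 *
      (aeval (4 * k + 1 : ℚ) f - aeval (-(4 * k + 1) : ℚ) f) := by
  simp [oddWeightedSum]

lemma oddWeightedSum_X_pow_of_even (N : ℕ) {n : ℕ} (hn : Even n) :
    oddWeightedSum N (X ^ n) = 0 := by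
  rw [oddWeightedSum_apply]
  refine sum_eq_zero fun k _ ↦ ?_
  rw [map_pow, map_pow, aeval_X, aeval_X, hn.neg_pow, sub_self, mul_zero]

lemma oddWeightedSum_X_pow_of_odd (N : ℕ) {n : ℕ} (hn : Odd n) :
    oddWeightedSum N (X ^ n) = ∑ k ∈ range (N + 1), vanHammeTerm k * (4 * k + 1) ^ n := by
  rw [oddWeightedSum_apply]
  refine sum_congr rfl fun k _ ↦ ?_
  rw [map_pow, map_pow, aeval_X, aeval_X, hn.neg_pow]
  ring

lemma oddWeightedSum_telescoping (N j : ℕ) :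
    oddWeightedSum N ((X + 1) ^ 3 * (X + 2) ^ (2 * j)) =
      4 * (2 * N + 1) ^ 3 * vanHammeTerm N * (4 * N + 3) ^ (2 * j) := by
  simp only [oddWeightedSum_apply, map_mul, map_pow, map_add, aeval_X, map_one, map_ofNat]
  induction N with
  | zero =>
    rw [zero_add, sum_range_one, Nat.cast_zero, pow_mul, pow_mul, pow_mul]
    norm_num1
    ring
  | succ N ih =>
    have hneg : (-(4 * ((N : ℚ) + 1) + 1) + 2) ^ (2 * j) = (4 * N + 3) ^ (2 * j) := by
      rw [← (even_two_mul j).neg_pow]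
      ring
    rw [sum_range_succ, ih]
    push_cast
    rw [hneg]
    linear_combination 4 * (4 * N + 3) ^ (2 * j) * vanHammeTerm_succ N

/-- The integer polynomials `f` whose sum `oddWeightedSum` is, with integers `a` and `c` independent
of `p`, congruent modulo `p ^ 4` to the right-hand side of the supercongruence. -/
def supercongruenceSubmodule : Submodule ℤ ℤ[X] where
  carrier := {f | ∃ a c : ℤ, ∀ (p N : ℕ) [Fact p.Prime], p = 2 * N + 1 → 5 ≤ p →
    PadicModEq p 4 (oddWeightedSum N f)
      (a * (p * (-1) ^ N + p ^ 3 * eulerNumber (p - 3)) + p ^ 3 * c)}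
  zero_mem' := ⟨0, 0, fun p N _ _ _ ↦ by simpa using .refl _⟩
  add_mem' := by
    rintro f g ⟨a, c, hf⟩ ⟨a', c', hg⟩
    refine ⟨a + a', c + c', fun p N _ hp hp₅ ↦ ?_⟩
    rw [map_add]
    convert (hf p N hp hp₅).add (hg p N hp hp₅) using 1
    push_cast
    ring
  smul_mem' := by
    rintro z f ⟨a, c, hf⟩
    refine ⟨z * a, z * c, fun p N _ hp hp₅ ↦ ?_⟩
    rw [map_smul, zsmul_eq_mul]
    convert (hf p N hp hp₅).mul_left (HasResidue.intCast z) using 1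
    push_cast
    ring

namespace supercongruenceSubmodule

lemma X_pow_mem_of_even {n : ℕ} (hn : Even n) : X ^ n ∈ supercongruenceSubmodule :=
  ⟨0, 0, fun p N _ _ _ ↦ by simpa [oddWeightedSum_X_pow_of_even N hn] using .refl _⟩

lemma X_mem : X ∈ supercongruenceSubmodule := by
  refine ⟨1, 0, fun p N _ hp hp₅ ↦ ?_⟩
  have h := oddWeightedSum_X_pow_of_odd N odd_one
  simp only [pow_one] at h
  simpa [h] using sum_vanHammeTerm_mul_modEq hp hp₅

lemma telescoping_mem (j : ℕ) :
    (X + 1) ^ 3 * (X + 2) ^ (2 * j) ∈ supercongruenceSubmodule := by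
  refine ⟨0, 4, fun p N _ hp _ ↦ ?_⟩
  have hp' : (2 * N + 1 : ℚ) = p := mod_cast hp.symm
  have hfactor : HasResidue ((4 * N + 3 : ℚ) ^ (2 * j)) (1 : ZMod p) := by
    have h := ((HasResidue.prime (p := p).mul (HasResidue.natCast 2)).add .one).pow (2 * j)
    rw [zero_mul, zero_add, one_pow, ← hp'] at h
    convert h using 2
    push_cast
    ring
  have h := PadicModEq.prime_pow_mul (n := 3)
    ((HasResidue.natCast 4).mul ((hasResidue_vanHammeTerm hp).mul hfactor))
    ((HasResidue.natCast 4).mul (HasResidue.one.mul HasResidue.one))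
  rw [oddWeightedSum_telescoping, hp']
  convert h using 1 <;> push_cast <;> ring

lemma exists_monic_natDegree_eq (n : ℕ) :
    ∃ f ∈ supercongruenceSubmodule, f.Monic ∧ f.natDegree = n := by
  obtain hn | rfl | ⟨j, rfl⟩ : Even n ∨ n = 1 ∨ ∃ j, n = 3 + 2 * j := by
    rcases n.even_or_odd with hn | ⟨j, rfl⟩
    · exact .inl hn
    · rcases j with - | j
      · exact .inr (.inl rfl)
      · exact .inr (.inr ⟨j, by ring⟩)
  · exact ⟨X ^ n, X_pow_mem_of_even hn, monic_X_pow n, natDegree_X_pow n⟩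
  · exact ⟨X, X_mem, monic_X, natDegree_X⟩
  · have h₁ : ((X + 1 : ℤ[X]) ^ 3).Monic := (monic_X_add_C 1).pow 3
    have h₂ : ((X + 2 : ℤ[X]) ^ (2 * j)).Monic := (monic_X_add_C 2).pow (2 * j)
    refine ⟨_, telescoping_mem j, h₁.mul h₂, ?_⟩
    rw [h₁.natDegree_mul h₂, natDegree_pow, natDegree_pow, ← C_1, natDegree_X_add_C,
      ← map_ofNat C, natDegree_X_add_C, mul_one, mul_one]

lemma eq_top : supercongruenceSubmodule = ⊤ :=
  submodule_eq_top_of_forall_exists_monic exists_monic_natDegree_eq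

end supercongruenceSubmodule

end OddPolynomials

/-- for every positive odd m there exist integers a, c such that for all
primes p ≥ 5, Σ_{k=0}^{(p-1)/2} (-1)^k (4k+1)^m ((1/2)_k/(1)_k)^3
≡ a(p(-1)^{(p-1)/2} + p^3 E_{p-3}) + p^3 c (mod p^4) in the p-adic sense. -/
theorem stmt12 (m : ℕ) (hm : Odd m) (hm0 : 0 < m) :
    ∃ a c : ℤ, ∀ p : ℕ, p.Prime → 5 ≤ p →
      ∀ S R : ℚ,
        S = ∑ k ∈ Finset.range ((p - 1) / 2 + 1),
          (-1 : ℚ) ^ k * (4 * (k : ℚ) + 1) ^ m *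
            ((∏ i ∈ Finset.range k, ((1 : ℚ) / 2 + i)) / (Nat.factorial k)) ^ 3 →
        R = (a : ℚ) * ((p : ℚ) * (-1) ^ ((p - 1) / 2) + (p : ℚ) ^ 3 * eulerNumber (p - 3))
            + (p : ℚ) ^ 3 * (c : ℚ) →
        (S = R ∨ (4 : ℤ) ≤ padicValRat p (S - R)) := by
  obtain ⟨a, c, h⟩ := supercongruenceSubmodule.eq_top.ge (Submodule.mem_top (x := X ^ m))
  refine ⟨a, c, fun p hp hp₅ S R hS hR ↦ ?_⟩
  have : Fact p.Prime := ⟨hp⟩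
  have hN : p = 2 * ((p - 1) / 2) + 1 := by
    have := hp.mod_two_eq_one_iff_ne_two.2 (by lia)
    lia
  have hsum : S = oddWeightedSum ((p - 1) / 2) (X ^ m) := by
    rw [hS, oddWeightedSum_X_pow_of_odd _ hm]
    refine sum_congr rfl fun k _ ↦ ?_
    rw [vanHammeTerm, halfRising_eq_prod, mul_right_comm]
  rw [hsum, hR]
  exact (h p ((p - 1) / 2) hN hp₅).eq_or_le_padicValRat
end

section
/- Let a(k), b(k) ∈ K[k] with a(k) = b(k+α), b(β+k) = b(β-k), and -(α+1)·deg a ∉ ℕ. Set γ = -β + (α-1)/2 and r = deg a. Then for every nonnegative integer m, the coset of (k+γ)^{2m} modulo S_{a,b} lies in the span of the cosets of (k+γ)^{2i} with 0 ≤ 2i < r - 1, and the coset of (k+γ)^{2m+1} lies in the span of the cosets of (k+γ)^{2i+1} with 0 ≤ 2i+1 < r - 1. -/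
/-!
Put `s = (α + 1) / 2` and `B(t) = b(β + t)`, an even polynomial of degree `r`. In the variable
`t = k + γ` the map `x(k) ↦ a(k) x(k + 1) - b(k - 1) x(k)` becomes
`y(t) ↦ B(t + s) y(t + 1/2) - B(t - s) y(t - 1/2)`, which sends `t ^ j` to `F(t) - (-1) ^ j F(-t)`
with `F(t) = B(t + s) (t + 1/2) ^ j`. As `B` is even, this has only terms of the parity opposite
to `j`, and its term of degree `r + j - 1` is `((α + 1) r + j)` times the leading coefficient of
`B`, which is nonzero. So `S_{a,b}` contains, in the variable `t`, a polynomial of definite parity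
in every degree at least `r - 1`, and powers of `t` reduce within their parity class.
-/

open Polynomial

section Coefficients

theorem nextCoeff_mul_of_leadingCoeff_mul_ne_zero {R : Type*} [Semiring R] {p q : R[X]}
    (h : p.leadingCoeff * q.leadingCoeff ≠ 0) :
    (p * q).nextCoeff = p.leadingCoeff * q.nextCoeff + p.nextCoeff * q.leadingCoeff := by
  simp only [← coeff_one_reverse, reverse_mul h, mul_coeff_one, coeff_zero_reverse]

theorem nextCoeff_mul_X_add_C_pow {R : Type*} [CommSemiring R] (p : R[X]) (h : R) (j : ℕ) :
    (p * (X + C h) ^ j).nextCoeff = p.nextCoeff + p.leadingCoeff * (j * h) := by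
  nontriviality R
  rcases eq_or_ne p 0 with rfl | hp
  · simp
  have hmonic : ((X + C h) ^ j).Monic := (monic_X_add_C h).pow j
  rw [nextCoeff_mul_of_leadingCoeff_mul_ne_zero (by simpa [hmonic.leadingCoeff] using hp),
    hmonic.leadingCoeff, (monic_X_add_C h).nextCoeff_pow, nextCoeff_X_add_C, nsmul_eq_mul,
    mul_one, add_comm]

theorem nextCoeff_taylor {R : Type*} [CommSemiring R] (s : R) (p : R[X]) :
    (taylor s p).nextCoeff = p.nextCoeff + p.natDegree * s * p.leadingCoeff := by
  rcases hp : p.natDegree with _ | n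
  · simp [nextCoeff, hp]
  have hdeg : (hasseDeriv n p).natDegree < 2 := by
    have := natDegree_hasseDeriv_le p n
    omega
  rw [nextCoeff_of_natDegree_pos (by simp [hp]), nextCoeff_of_natDegree_pos (by simp [hp]),
    natDegree_taylor, hp, Nat.add_sub_cancel, taylor_coeff, eval_eq_sum_range' hdeg, leadingCoeff,
    hp]
  simp only [Finset.sum_range_succ, Finset.sum_range_zero, hasseDeriv_coeff, zero_add,
    Nat.choose_self, add_comm 1 n, Nat.choose_succ_self_right]
  push_cast
  ring

end Coefficients

section Parity

theorem taylor_comp_neg_X {R : Type*} [CommRing R] (s : R) (p : R[X]) :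
    (taylor s p).comp (-X) = taylor (-s) (p.comp (-X)) := by
  simp [taylor_apply, comp_assoc, add_comm]

variable {R : Type*} [Ring R]

theorem coeff_comp_neg_X (p : R[X]) (i : ℕ) :
    (p.comp (-X)).coeff i = (-1) ^ i * p.coeff i := by
  rw [← neg_one_mul, ← C_1, ← C_neg, comp_C_mul_X_coeff, ((Commute.neg_one_left _).pow_left i).eq]

/-- The failure of `p` to have the parity of its degree, that is, to satisfy
`p(-X) = (-1) ^ natDegree p * p(X)`. It is twice the part of `p` supported in the degrees of the
parity opposite to that of `natDegree p`. -/
noncomputable def parityDefect (p : R[X]) : R[X] :=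
  p - C ((-1) ^ p.natDegree) * p.comp (-X)

theorem coeff_parityDefect (p : R[X]) (i : ℕ) :
    (parityDefect p).coeff i = (1 - (-1) ^ (p.natDegree + i)) * p.coeff i := by
  rw [parityDefect, coeff_sub, coeff_C_mul, coeff_comp_neg_X, pow_add, sub_mul,
    one_mul, mul_assoc]

theorem odd_natDegree_add_of_mem_support_parityDefect {p : R[X]} {i : ℕ}
    (hi : i ∈ (parityDefect p).support) : Odd (p.natDegree + i) := by
  by_contra h
  rw [Nat.not_odd_iff_even] at h
  exact mem_support_iff.mp hi (by rw [coeff_parityDefect, h.neg_one_pow, sub_self, zero_mul])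

variable [NoZeroDivisors R] [NeZero (2 : R)]

theorem degree_parityDefect {p : R[X]} (hp : p.nextCoeff ≠ 0) :
    (parityDefect p).degree = (p.natDegree - 1 : ℕ) := by
  have hpos : 0 < p.natDegree := natDegree_pos_of_nextCoeff_ne_zero hp
  refine le_antisymm (degree_le_iff_coeff_zero _ _ |>.mpr fun i hi => ?_)
    (le_degree_of_ne_zero ?_)
  · have hi : p.natDegree ≤ i := by
      have := Nat.cast_lt.mp hi
      omega
    rcases hi.eq_or_lt with rfl | hlt
    · rw [coeff_parityDefect, (Even.add_self p.natDegree).neg_one_pow, sub_self, zero_mul]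
    · rw [coeff_parityDefect, coeff_eq_zero_of_natDegree_lt hlt, mul_zero]
  · have hodd : Odd (p.natDegree + (p.natDegree - 1)) := ⟨p.natDegree - 1, by omega⟩
    rw [coeff_parityDefect, hodd.neg_one_pow, sub_neg_eq_add, one_add_one_eq_two,
      ← nextCoeff_of_natDegree_pos hpos]
    exact mul_ne_zero two_ne_zero hp

theorem even_of_comp_neg_X_eq {p : R[X]} (hp : p.comp (-X) = p) {i : ℕ} (hi : p.coeff i ≠ 0) :
    Even i := by
  by_contra h
  rw [Nat.not_even_iff_odd] at h
  have hneg : -p.coeff i = p.coeff i := by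
    simpa [coeff_comp_neg_X, h.neg_one_pow] using congrArg (coeff · i) hp
  have htwo : 2 * p.coeff i = 0 := by
    rw [two_mul, neg_eq_iff_add_eq_zero.mp hneg]
  exact hi ((mul_eq_zero.mp htwo).resolve_left two_ne_zero)

theorem even_natDegree_of_comp_neg_X_eq {p : R[X]} (hp : p.comp (-X) = p) : Even p.natDegree := by
  rcases eq_or_ne p 0 with rfl | hp0
  · simp
  · exact even_of_comp_neg_X_eq hp (leadingCoeff_ne_zero.mpr hp0)

theorem nextCoeff_eq_zero_of_comp_neg_X_eq {p : R[X]} (hp : p.comp (-X) = p) :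
    p.nextCoeff = 0 := by
  by_contra h
  obtain ⟨hdeg, hcoeff⟩ := nextCoeff_ne_zero.mp h
  have heven := even_natDegree_of_comp_neg_X_eq hp
  have heven' := even_of_comp_neg_X_eq hp hcoeff
  rw [Nat.even_iff] at heven heven'
  omega

end Parity

theorem X_pow_mem_of_forall_exists_degree_eq {K : Type*} [Field K] {V : Submodule K K[X]}
    {S : Set ℕ} (hV : ∀ n ∈ S, ∃ p ∈ V, p.degree = n ∧ (p.support : Set ℕ) ⊆ S)
    {n : ℕ} (hn : n ∈ S) : X ^ n ∈ V := by
  induction n using Nat.strong_induction_on with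
  | _ n ih =>
    obtain ⟨p, hpV, hdeg, hsupp⟩ := hV n hn
    have hnat : p.natDegree = n := natDegree_eq_of_degree_eq_some hdeg
    have hlead : p.leadingCoeff ≠ 0 := leadingCoeff_ne_zero.mpr fun h => by simp [h] at hdeg
    have hrest : p.eraseLead ∈ V := by
      rw [p.eraseLead.as_sum_support_C_mul_X_pow]
      refine V.sum_mem fun i hi => ?_
      rw [← smul_eq_C_mul]
      refine V.smul_mem _ (ih i (hnat ▸ lt_natDegree_of_mem_eraseLead_support hi) (hsupp ?_))
      rw [eraseLead_support] at hi
      exact Finset.mem_of_mem_erase hi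
    rw [← eraseLead_add_C_mul_X_pow p, hnat, ← smul_eq_C_mul] at hpV
    exact (V.smul_mem_iff hlead).mp ((V.add_mem_iff_right hrest).mp hpV)

section DifferenceOperator

variable {R : Type*} [CommRing R]

/-- The linear map `x(k) ↦ a(k) x(k + 1) - b(k - 1) x(k)`, whose range is the space `S_{a,b}`. -/
noncomputable def differenceOperator (a b : R[X]) : R[X] →ₗ[R] R[X] :=
  LinearMap.mulLeft R a ∘ₗ taylor 1 - LinearMap.mulLeft R (taylor (-1) b)

theorem differenceOperator_apply (a b x : R[X]) :
    differenceOperator a b x = a * x.comp (X + 1) - b.comp (X - 1) * x := by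
  simp [differenceOperator, taylor_apply, sub_eq_add_neg]

variable {a b B : R[X]} {γ s h : R}

theorem differenceOperator_taylor_X_pow (hB : B.comp (-X) = B) (ha : a = taylor (γ + s) B)
    (hb : taylor (-1) b = taylor (γ - s) B) (hh : h + h = 1) (j : ℕ) :
    differenceOperator a b (taylor (γ - h) (X ^ j)) =
      taylor γ (taylor s B * (X + C h) ^ j -
        C ((-1) ^ j) * (taylor s B * (X + C h) ^ j).comp (-X)) := by
  have hreflect : C ((-1) ^ j) * (taylor s B * (X + C h) ^ j).comp (-X) =
      taylor (-s) B * (X + C (-h)) ^ j := by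
    have hneg : (-X + C h : R[X]) = -1 * (X + C (-h)) := by rw [C_neg]; ring
    rw [mul_comp, taylor_comp_neg_X, hB, pow_comp, add_comp, X_comp, C_comp, hneg, mul_pow,
      C_pow, C_neg, C_1, mul_left_comm, ← mul_assoc ((-1) ^ j), ← mul_pow, neg_one_mul, neg_neg,
      one_pow, one_mul]
  have hshift : 1 + (γ - h) = γ + h := by rw [← hh]; ring
  rw [hreflect, differenceOperator, LinearMap.sub_apply, LinearMap.comp_apply,
    LinearMap.mulLeft_apply, LinearMap.mulLeft_apply, hb, ha, taylor_taylor, hshift, map_sub,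
    taylor_mul, taylor_mul, taylor_taylor, taylor_taylor, ← taylor_X_pow h, ← taylor_X_pow (-h),
    taylor_taylor, taylor_taylor, ← sub_eq_add_neg, ← sub_eq_add_neg]

end DifferenceOperator

section Reduction

variable {K : Type*} [Field K] [NeZero (2 : K)] {a b B : K[X]} {γ s : K}

theorem nextCoeff_taylor_mul_X_add_C_half_pow_ne_zero (hB : B.comp (-X) = B)
    (hs : ∀ n : ℕ, 2 * s * B.natDegree + n ≠ 0) (j : ℕ) :
    (taylor s B * (X + C 2⁻¹) ^ j).nextCoeff ≠ 0 := by
  have hB0 : B ≠ 0 := by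
    rintro rfl
    exact hs 0 (by simp)
  have htwo : (2 : K) ≠ 0 := two_ne_zero
  have hnext : (taylor s B * (X + C 2⁻¹) ^ j).nextCoeff =
      2⁻¹ * (2 * s * B.natDegree + j) * B.leadingCoeff := by
    rw [nextCoeff_mul_X_add_C_pow, nextCoeff_taylor, leadingCoeff_taylor,
      nextCoeff_eq_zero_of_comp_neg_X_eq hB]
    field_simp
    ring
  rw [hnext]
  exact mul_ne_zero (mul_ne_zero (inv_ne_zero htwo) (hs j)) (leadingCoeff_ne_zero.mpr hB0)

theorem exists_taylor_mem_range_differenceOperator (hB : B.comp (-X) = B)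
    (ha : a = taylor (γ + s) B) (hb : taylor (-1) b = taylor (γ - s) B)
    (hs : ∀ n : ℕ, 2 * s * B.natDegree + n ≠ 0) {n : ℕ} (hn : B.natDegree - 1 ≤ n) :
    ∃ p : K[X], taylor γ p ∈ LinearMap.range (differenceOperator a b) ∧ p.degree = n ∧
      ∀ i ∈ p.support, i ≡ n [MOD 2] := by
  have hpos : 0 < B.natDegree := Nat.pos_of_ne_zero fun h => hs 0 (by simp [h])
  have heven : Even B.natDegree := even_natDegree_of_comp_neg_X_eq hB
  obtain ⟨j, rfl⟩ := Nat.exists_eq_add_of_le hn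
  set F := taylor s B * (X + C 2⁻¹) ^ j with hF
  have hFdeg : F.natDegree = B.natDegree + j := by
    have hB0 : taylor s B ≠ 0 := (taylor_eq_zero s B).not.mpr (ne_zero_of_natDegree_gt hpos)
    rw [hF, natDegree_mul hB0 (pow_ne_zero _ (X_add_C_ne_zero _)), natDegree_taylor,
      natDegree_pow_X_add_C]
  have hsign : (-1 : K) ^ F.natDegree = (-1) ^ j := by
    rw [hFdeg, pow_add, heven.neg_one_pow, one_mul]
  refine ⟨parityDefect F, ⟨taylor (γ - 2⁻¹) (X ^ j), ?_⟩, ?_, fun i hi => ?_⟩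
  · have hhalf : (2⁻¹ + 2⁻¹ : K) = 1 := by
      rw [← two_mul, mul_inv_cancel₀ two_ne_zero]
    rw [differenceOperator_taylor_X_pow hB ha hb hhalf, parityDefect, hsign]
  · rw [degree_parityDefect (nextCoeff_taylor_mul_X_add_C_half_pow_ne_zero hB hs j), hFdeg,
      Nat.sub_add_comm hpos]
  · have hodd := odd_natDegree_add_of_mem_support_parityDefect hi
    rw [hFdeg, Nat.odd_iff] at hodd
    rw [Nat.ModEq]
    omega

theorem X_add_C_pow_mem_of_range_differenceOperator_le (hB : B.comp (-X) = B)
    (ha : a = taylor (γ + s) B) (hb : taylor (-1) b = taylor (γ - s) B)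
    (hs : ∀ n : ℕ, 2 * s * B.natDegree + n ≠ 0) {W : Submodule K K[X]}
    (hrange : LinearMap.range (differenceOperator a b) ≤ W) {n : ℕ}
    (hlow : ∀ i < B.natDegree - 1, i ≡ n [MOD 2] → (X + C γ) ^ i ∈ W) :
    (X + C γ) ^ n ∈ W := by
  have hmem : X ^ n ∈ W.comap (taylor γ) := by
    refine X_pow_mem_of_forall_exists_degree_eq (S := {i | i ≡ n [MOD 2]}) (fun m hm => ?_) rfl
    rcases lt_or_ge m (B.natDegree - 1) with hlt | hge
    · refine ⟨X ^ m, ?_, degree_X_pow m, ?_⟩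
      · simpa only [Submodule.mem_comap, taylor_X_pow] using hlow m hlt hm
      · simpa [support_X_pow] using hm
    · obtain ⟨p, hp, hdeg, hsupp⟩ := exists_taylor_mem_range_differenceOperator hB ha hb hs hge
      exact ⟨p, hrange hp, hdeg, fun i hi => (hsupp i hi).trans hm⟩
  simpa only [Submodule.mem_comap, taylor_X_pow] using hmem

theorem exists_X_add_C_pow_eq_differenceOperator_add_sum (hB : B.comp (-X) = B)
    (ha : a = taylor (γ + s) B) (hb : taylor (-1) b = taylor (γ - s) B)
    (hs : ∀ n : ℕ, 2 * s * B.natDegree + n ≠ 0) {e : ℕ} (he : e < 2) (m : ℕ) :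
    ∃ x : K[X], ∃ c : ℕ → K, (X + C γ) ^ (2 * m + e) = differenceOperator a b x +
      ∑ i ∈ (Finset.range B.natDegree).filter (fun i => 2 * i + e < B.natDegree - 1),
        C (c i) * (X + C γ) ^ (2 * i + e) := by
  set I := (Finset.range B.natDegree).filter (fun i => 2 * i + e < B.natDegree - 1)
  let low : Submodule K K[X] := .span K ((fun i => (X + C γ) ^ (2 * i + e)) '' (I : Set ℕ))
  have hmem : (X + C γ) ^ (2 * m + e) ∈ LinearMap.range (differenceOperator a b) ⊔ low := by
    refine X_add_C_pow_mem_of_range_differenceOperator_le hB ha hb hs le_sup_left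
      fun i hi hmod => Submodule.mem_sup_right (Submodule.subset_span ?_)
    rw [Nat.ModEq] at hmod
    obtain ⟨k, rfl⟩ : ∃ k, i = 2 * k + e := ⟨i / 2, by omega⟩
    have hk : k ∈ I := Finset.mem_filter.mpr ⟨Finset.mem_range.mpr (by omega), hi⟩
    exact ⟨k, hk, rfl⟩
  obtain ⟨_, ⟨x, rfl⟩, z, hz, hsum⟩ := Submodule.mem_sup.mp hmem
  obtain ⟨c, rfl⟩ := (Submodule.mem_span_image_finset_iff_exists_fun' K).mp hz
  exact ⟨x, c, by simpa only [smul_eq_C_mul] using hsum.symm⟩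

end Reduction

theorem stmt14_general {K : Type*} [Field K] [NeZero (2 : K)] (a b : K[X]) (α β γ : K)
    (hab : a = b.comp (X + C α))
    (hsym : b.comp (C β + X) = b.comp (C β - X))
    (hγ : γ = -β + (α - 1) / 2) (r : ℕ) (hr : r = a.natDegree)
    (hna : ∀ n : ℕ, -(α + 1) * (r : K) ≠ (n : K)) :
    ∀ m : ℕ,
      (∃ x : K[X], ∃ c : ℕ → K,
        (X + C γ) ^ (2 * m) = (a * x.comp (X + 1) - b.comp (X - 1) * x)
          + ∑ i ∈ Finset.filter (fun i => 2 * i < r - 1) (Finset.range r),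
              C (c i) * (X + C γ) ^ (2 * i)) ∧
      (∃ x : K[X], ∃ c : ℕ → K,
        (X + C γ) ^ (2 * m + 1) = (a * x.comp (X + 1) - b.comp (X - 1) * x)
          + ∑ i ∈ Finset.filter (fun i => 2 * i + 1 < r - 1) (Finset.range r),
              C (c i) * (X + C γ) ^ (2 * i + 1)) := by
  have htwo : (2 : K) ≠ 0 := two_ne_zero
  have hB : (taylor β b).comp (-X) = taylor β b := by
    simpa [taylor_apply, comp_assoc, add_comm, sub_eq_add_neg] using hsym.symm
  have hdeg : (taylor β b).natDegree = r := by
    rw [hr, hab, ← taylor_apply, natDegree_taylor, natDegree_taylor]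
  have ha : a = taylor (γ + (α + 1) / 2) (taylor β b) := by
    rw [hab, ← taylor_apply, taylor_taylor, hγ]
    congr 2
    field_simp
    ring
  have hb : taylor (-1) b = taylor (γ - (α + 1) / 2) (taylor β b) := by
    rw [taylor_taylor, hγ]
    congr 2
    field_simp
    ring
  have hs : ∀ n : ℕ, 2 * ((α + 1) / 2) * ((taylor β b).natDegree : K) + n ≠ 0 := fun n h => by
    rw [hdeg, mul_div_cancel₀ _ htwo] at h
    exact hna n (by linear_combination -h)
  have hred {e : ℕ} (he : e < 2) (m : ℕ) :=
    exists_X_add_C_pow_eq_differenceOperator_add_sum hB ha hb hs he m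
  simp only [hdeg, differenceOperator_apply] at hred
  exact fun m => ⟨hred zero_lt_two m, hred one_lt_two m⟩

/-- for a(k) = b(k+α) with b(β+k) = b(β-k) and -(α+1)·deg a ∉ ℕ,
the coset of (k+γ)^{2m} (resp. (k+γ)^{2m+1}) modulo S_{a,b} lies in the span of
the cosets of (k+γ)^{2i}, 0 ≤ 2i < r-1 (resp. (k+γ)^{2i+1}, 0 ≤ 2i+1 < r-1). -/
theorem stmt14 {K : Type*} [Field K] [CharZero K] (a b : Polynomial K) (α β γ : K)
    (hab : a = b.comp (X + C α))
    (hsym : b.comp (C β + X) = b.comp (C β - X))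
    (hγ : γ = -β + (α - 1) / 2) (r : ℕ) (hr : r = a.natDegree)
    (hna : ∀ n : ℕ, -(α + 1) * (r : K) ≠ (n : K)) :
    ∀ m : ℕ,
      (∃ x : Polynomial K, ∃ c : ℕ → K,
        (X + C γ) ^ (2 * m) = (a * x.comp (X + 1) - b.comp (X - 1) * x)
          + ∑ i ∈ Finset.filter (fun i => 2 * i < r - 1) (Finset.range r),
              C (c i) * (X + C γ) ^ (2 * i)) ∧
      (∃ x : Polynomial K, ∃ c : ℕ → K,
        (X + C γ) ^ (2 * m + 1) = (a * x.comp (X + 1) - b.comp (X - 1) * x)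
          + ∑ i ∈ Finset.filter (fun i => 2 * i + 1 < r - 1) (Finset.range r),
              C (c i) * (X + C γ) ^ (2 * i + 1)) :=
  stmt14_general a b α β γ hab hsym hγ r hr hna
end
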